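/- For every complex s with Re(s) > 1, ∑'_{(m,k)} 1/(m² + 15k²)^s = (1 − 2^{1−s} + 2^{1−2s})·ζ(s)·L(χ_{-15}, s) + (1 + 2^{1−s} + 2^{1−2s})·L(χ_{-3}, s)·L(χ_5, s), where ζ is the Riemann zeta function. -/

import Mathlib

/-- The quadratic Dirichlet character modulo 3:
`χ₋₃(n) = 1` if `n ≡ 1 (mod 3)`, `-1` if `n ≡ 2 (mod 3)`, `0` if `3 ∣ n`. -/
def chiNeg3 (n : ℕ) : ℤ :=
  if n % 3 = 1 then 1 else if n % 3 = 2 then -1 else 0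

/-- The quadratic Dirichlet character modulo 5 given by the Legendre symbol `(n/5)`. -/
def chi5 (n : ℕ) : ℤ :=
  if n % 5 = 1 ∨ n % 5 = 4 then 1 else if n % 5 = 2 ∨ n % 5 = 3 then -1 else 0

/-- The quadratic Dirichlet character modulo 15, `χ₋₁₅(n) = (n/3)·(n/5)`. -/
def chiNeg15 (n : ℕ) : ℤ := chiNeg3 n * chi5 n

/-- The Dirichlet `L`-series `L(χ, s) = ∑_{n ≥ 1} χ(n) n^{-s}`. -/
noncomputable def LSer (χ : ℕ → ℤ) (s : ℂ) : ℂ :=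
  ∑' n : ℕ, (χ (n + 1) : ℂ) / ((n : ℂ) + 1) ^ s


lemma abs_le_sq_int (x : ℤ) : |x| ≤ x ^ 2 := by
  rcases eq_or_ne x 0 with rfl | h
  · simp
  · have := Int.one_le_abs h
    nlinarith [sq_abs x]

def fA (e : Bool) : ℤ := cond e 3 1
def fB (e : Bool) : ℤ := cond e 5 15

def SS (e : Bool) (n : ℕ) : Set (ℤ × ℤ) := {z | fA e * z.1 ^ 2 + fB e * z.2 ^ 2 = 4 * (n : ℤ)}

lemma SS_fin (e : Bool) (n : ℕ) : (SS e n).Finite := by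
  apply ((Set.finite_Icc (-(4 * n : ℤ)) (4 * n)).prod (Set.finite_Icc (-(4 * n : ℤ)) (4 * n))).subset
  rintro ⟨x, y⟩ h
  simp only [SS, Set.mem_ofPred_eq] at h
  have hA : 1 ≤ fA e := by cases e <;> simp [fA]
  have hB : 1 ≤ fB e := by cases e <;> simp [fB]
  have hx : x ^ 2 ≤ 4 * n := by nlinarith [sq_nonneg x, sq_nonneg y]
  have hy : y ^ 2 ≤ 4 * n := by nlinarith [sq_nonneg x, sq_nonneg y]
  have hx2 := abs_le_sq_int x
  have hy2 := abs_le_sq_int y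
  simp only [Set.mem_prod, Set.mem_Icc, ← abs_le]
  constructor <;> omega

noncomputable def NN (e : Bool) (n : ℕ) : ℕ := (SS e n).ncard

def k1 (e d : Bool) : ℤ := cond e (cond d 3 1) 1
def k2 (e d : Bool) : ℤ := cond e 5 (cond d 5 15)
def k3 (e d : Bool) : ℤ := cond e (cond d 1 3) 1
def k4 (e d : Bool) : ℤ := cond e 1 (cond d 3 1)

/-- twice the product -/
def X2 (e d : Bool) (z w : ℤ × ℤ) : ℤ := k1 e d * z.1 * w.1 - k2 e d * z.2 * w.2
def Y2 (e d : Bool) (z w : ℤ × ℤ) : ℤ := k3 e d * z.1 * w.2 + k4 e d * z.2 * w.1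

lemma par {e : Bool} {n : ℕ} {z : ℤ × ℤ} (h : z ∈ SS e n) : z.1 % 2 = z.2 % 2 := by
  obtain ⟨x, y⟩ := z
  simp only [SS, Set.mem_ofPred_eq] at h ⊢
  rcases Int.emod_two_eq_zero_or_one x with hx | hx <;> rcases Int.emod_two_eq_zero_or_one y with hy | hy <;> try omega
  all_goals exfalso
  all_goals have h2 := congrArg (· % 2) h
  all_goals cases e <;> simp [fA, fB, pow_two, Int.add_emod, Int.mul_emod, hx, hy] at h2

lemma prod_even {e d : Bool} {n m : ℕ} {z w : ℤ × ℤ} (hz : z ∈ SS e n) (hw : w ∈ SS d m) :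
    2 ∣ X2 e d z w ∧ 2 ∣ Y2 e d z w := by
  have h1 := par hz
  have h2 := par hw
  rcases Int.emod_two_eq_zero_or_one z.1 with hx | hx <;>
  rcases Int.emod_two_eq_zero_or_one w.1 with hy | hy <;>
  rw [hx] at h1 <;> rw [hy] at h2 <;>
  constructor <;> apply Int.dvd_of_emod_eq_zero <;>
  cases e <;> cases d <;>
  simp [X2, Y2, k1, k2, k3, k4, Int.add_emod, Int.sub_emod, Int.mul_emod, hx, hy, ← h1, ← h2]

lemma qnorm_mul (e d : Bool) (z w : ℤ × ℤ) :
    fA (xor e d) * (X2 e d z w) ^ 2 + fB (xor e d) * (Y2 e d z w) ^ 2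
      = (fA e * z.1 ^ 2 + fB e * z.2 ^ 2) * (fA d * w.1 ^ 2 + fB d * w.2 ^ 2) := by
  cases e <;> cases d <;> simp [X2, Y2, k1, k2, k3, k4, fA, fB] <;> ring

def cj (w : ℤ × ℤ) : ℤ × ℤ := (w.1, - w.2)

lemma cj_mem {d : Bool} {n : ℕ} {w : ℤ × ℤ} (h : w ∈ SS d n) : cj w ∈ SS d n := by
  simpa [SS, cj] using h

/-- halved product -/
def ml (e d : Bool) (z w : ℤ × ℤ) : ℤ × ℤ := (X2 e d z w / 2, Y2 e d z w / 2)

lemma ml_fst {e d : Bool} {n m : ℕ} {z w : ℤ × ℤ} (hz : z ∈ SS e n) (hw : w ∈ SS d m) :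
    2 * (ml e d z w).1 = X2 e d z w := Int.mul_ediv_cancel' (prod_even hz hw).1
lemma ml_snd {e d : Bool} {n m : ℕ} {z w : ℤ × ℤ} (hz : z ∈ SS e n) (hw : w ∈ SS d m) :
    2 * (ml e d z w).2 = Y2 e d z w := Int.mul_ediv_cancel' (prod_even hz hw).2

lemma ml_mem {e d : Bool} {n m : ℕ} {z w : ℤ × ℤ} (hz : z ∈ SS e n) (hw : w ∈ SS d m) :
    ml e d z w ∈ SS (xor e d) (n * m) := by
  have h := qnorm_mul e d z w
  rw [← ml_fst hz hw, ← ml_snd hz hw] at h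
  simp only [SS, Set.mem_ofPred_eq] at hz hw ⊢
  rw [hz, hw] at h
  push_cast
  linarith

/-- multiplying back by the conjugate -/
lemma ml_cj {e d : Bool} {n m : ℕ} {z w : ℤ × ℤ} (hz : z ∈ SS e n) (hw : w ∈ SS d m) :
    ml (xor e d) d (ml e d z w) (cj w) = ((m : ℤ) * z.1, (m : ℤ) * z.2) := by
  have hm := ml_mem hz hw
  have h1 := ml_fst hm (cj_mem hw)
  have h2 := ml_snd hm (cj_mem hw)
  have h3 := ml_fst hz hw
  have h4 := ml_snd hz hw
  have hw' : fA d * w.1 ^ 2 + fB d * w.2 ^ 2 = 4 * (m : ℤ) := hw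
  ext
  · show (ml (xor e d) d (ml e d z w) (cj w)).1 = (m : ℤ) * z.1
    generalize ml (xor e d) d (ml e d z w) (cj w) = q at *
    generalize ml e d z w = r at *
    cases e <;> cases d <;> simp [X2, Y2, k1, k2, k3, k4, fA, fB, cj] at * <;> grind
  · show (ml (xor e d) d (ml e d z w) (cj w)).2 = (m : ℤ) * z.2
    generalize ml (xor e d) d (ml e d z w) (cj w) = q at *
    generalize ml e d z w = r at *
    cases e <;> cases d <;> simp [X2, Y2, k1, k2, k3, k4, fA, fB, cj] at * <;> grind

lemma chi3_mul (m n : ℕ) : chiNeg3 (m * n) = chiNeg3 m * chiNeg3 n := by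
  simp only [chiNeg3, Nat.mul_mod m n 3]
  have h1 : m % 3 < 3 := Nat.mod_lt _ (by norm_num)
  have h2 : n % 3 < 3 := Nat.mod_lt _ (by norm_num)
  generalize m % 3 = a at *
  generalize n % 3 = b at *
  interval_cases a <;> interval_cases b <;> simp

lemma chi5_mul (m n : ℕ) : chi5 (m * n) = chi5 m * chi5 n := by
  simp only [chi5, Nat.mul_mod m n 5]
  have h1 : m % 5 < 5 := Nat.mod_lt _ (by norm_num)
  have h2 : n % 5 < 5 := Nat.mod_lt _ (by norm_num)
  generalize m % 5 = a at *
  generalize n % 5 = b at *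
  interval_cases a <;> interval_cases b <;> simp

lemma chi15_mul (m n : ℕ) : chiNeg15 (m * n) = chiNeg15 m * chiNeg15 n := by
  simp only [chiNeg15, chi3_mul, chi5_mul]; ring

def cv (f g : ℕ → ℤ) (n : ℕ) : ℤ := ∑ x ∈ n.divisorsAntidiagonal, f x.1 * g x.2

lemma cv_rec (f g : ℕ → ℤ) (hf : ∀ m n, f (m * n) = f m * f n) (hg : ∀ m n, g (m * n) = g m * g n)
    {p n : ℕ} (hp : p.Prime) (hn : n ≠ 0) :
    cv f g (p * n) + f p * g p * (if p ∣ n then cv f g (n / p) else 0) = (f p + g p) * cv f g n := by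
  have hp0 := hp.pos
  set s := n.divisorsAntidiagonal.image (fun x => (p * x.1, x.2)) with hs
  set t := n.divisorsAntidiagonal.image (fun x => (x.1, p * x.2)) with ht
  have hu : (p * n).divisorsAntidiagonal = s ∪ t := by
    ext ⟨a, b⟩
    simp only [hs, ht, Nat.mem_divisorsAntidiagonal, Finset.mem_union, Finset.mem_image, Prod.mk.injEq,
      Prod.exists]
    constructor
    · rintro ⟨h, h0⟩
      have : p ∣ a * b := ⟨n, h⟩
      rcases (Nat.Prime.dvd_mul hp).1 this with ⟨c, rfl⟩ | ⟨c, rfl⟩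
      · left
        refine ⟨c, b, ⟨?_, hn⟩, rfl, rfl⟩
        apply Nat.eq_of_mul_eq_mul_left hp0
        rw [← h]; ring
      · right
        refine ⟨a, c, ⟨?_, hn⟩, rfl, rfl⟩
        apply Nat.eq_of_mul_eq_mul_left hp0
        rw [← h]; ring
    · rintro (⟨c, d, ⟨h, -⟩, rfl, rfl⟩ | ⟨c, d, ⟨h, -⟩, rfl, rfl⟩)
      · refine ⟨by rw [← h]; ring, by positivity⟩
      · refine ⟨by rw [← h]; ring, by positivity⟩
  have hsum := Finset.sum_union_inter (s₁ := s) (s₂ := t) (f := fun x : ℕ × ℕ => f x.1 * g x.2)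
  have h1 : ∑ x ∈ s, f x.1 * g x.2 = f p * cv f g n := by
    rw [hs, Finset.sum_image, cv, Finset.mul_sum]
    · refine Finset.sum_congr rfl fun x _ => ?_
      simp only [hf]; ring
    · rintro ⟨a, b⟩ _ ⟨c, d⟩ _ h
      simp only [Prod.mk.injEq] at h ⊢
      exact ⟨Nat.eq_of_mul_eq_mul_left hp0 h.1, h.2⟩
  have h2 : ∑ x ∈ t, f x.1 * g x.2 = g p * cv f g n := by
    rw [ht, Finset.sum_image, cv, Finset.mul_sum]
    · refine Finset.sum_congr rfl fun x _ => ?_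
      simp only [hg]; ring
    · rintro ⟨a, b⟩ _ ⟨c, d⟩ _ h
      simp only [Prod.mk.injEq] at h ⊢
      exact ⟨h.1, Nat.eq_of_mul_eq_mul_left hp0 h.2⟩
  have h3 : ∑ x ∈ s ∩ t, f x.1 * g x.2 = f p * g p * (if p ∣ n then cv f g (n / p) else 0) := by
    split_ifs with hd
    · obtain ⟨k, rfl⟩ := hd
      have hk : k ≠ 0 := by rintro rfl; simp at hn
      rw [Nat.mul_div_cancel_left _ hp0]
      have : s ∩ t = k.divisorsAntidiagonal.image (fun x => (p * x.1, p * x.2)) := by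
        ext ⟨a, b⟩
        simp only [hs, ht, Nat.mem_divisorsAntidiagonal, Finset.mem_inter, Finset.mem_image, Prod.mk.injEq,
          Prod.exists]
        constructor
        · rintro ⟨⟨c, d, ⟨h, -⟩, rfl, rfl⟩, ⟨c', d', ⟨h', -⟩, rfl, rfl⟩⟩
          refine ⟨c, d', ⟨?_, hk⟩, rfl, rfl⟩
          apply Nat.eq_of_mul_eq_mul_left hp0
          rw [← h]; ring
        · rintro ⟨c, d, ⟨h, -⟩, rfl, rfl⟩
          exact ⟨⟨c, p * d, ⟨by rw [← h]; ring, hn⟩, rfl, rfl⟩, ⟨p * c, d, ⟨by rw [← h]; ring, hn⟩, rfl, rfl⟩⟩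
      rw [this, Finset.sum_image, cv, Finset.mul_sum]
      · refine Finset.sum_congr rfl fun x _ => ?_
        simp only [hf, hg]; ring
      · rintro ⟨a, b⟩ _ ⟨c, d⟩ _ h
        simp only [Prod.mk.injEq] at h ⊢
        exact ⟨Nat.eq_of_mul_eq_mul_left hp0 h.1, Nat.eq_of_mul_eq_mul_left hp0 h.2⟩
    · have : s ∩ t = ∅ := by
        rw [Finset.eq_empty_iff_forall_notMem]
        rintro ⟨a, b⟩
        simp only [hs, ht, Nat.mem_divisorsAntidiagonal, Finset.mem_inter, Finset.mem_image, Prod.mk.injEq,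
          Prod.exists]
        rintro ⟨⟨c, d, ⟨h, -⟩, rfl, rfl⟩, ⟨c', d', ⟨h', -⟩, h3, rfl⟩⟩
        exact hd ⟨c * d', by rw [← h]; ring⟩
      simp [this]
  rw [h1, h2, h3] at hsum
  rw [cv, hu, hsum]; ring

lemma leg15 {p : ℕ} [Fact p.Prime] (h2 : p ≠ 2) : legendreSym p (-15) = chiNeg15 p := by
  have : Fact (Nat.Prime 3) := ⟨Nat.prime_three⟩
  have : Fact (Nat.Prime 5) := ⟨Nat.prime_five⟩
  have e : (-15 : ℤ) = (-1) * ((3 : ℕ) : ℤ) * ((5 : ℕ) : ℤ) := by norm_num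
  have hodd : p % 2 = 1 := (Fact.out : p.Prime).eq_two_or_odd.resolve_left h2
  rw [e, legendreSym.mul, legendreSym.mul, legendreSym.at_neg_one h2,
    legendreSym.quadratic_reciprocity' (p := 3) (q := p) (by norm_num) h2,
    legendreSym.quadratic_reciprocity' (p := 5) (q := p) (by norm_num) h2,
    ZMod.χ₄_eq_neg_one_pow hodd]
  have a3 : legendreSym 3 (p : ℤ) = chiNeg3 p := by
    rw [legendreSym.mod, chiNeg3]
    have h1 : p % 3 < 3 := Nat.mod_lt _ (by norm_num)
    have : ((p : ℤ) % ((3 : ℕ) : ℤ)) = ((p % 3 : ℕ) : ℤ) := by push_cast; rfl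
    rw [this]
    generalize p % 3 = a at *
    interval_cases a <;> clear * - <;> decide +revert
  have a5 : legendreSym 5 (p : ℤ) = chi5 p := by
    rw [legendreSym.mod, chi5]
    have h1 : p % 5 < 5 := Nat.mod_lt _ (by norm_num)
    have : ((p : ℤ) % ((5 : ℕ) : ℤ)) = ((p % 5 : ℕ) : ℤ) := by push_cast; rfl
    rw [this]
    generalize p % 5 = a at *
    interval_cases a <;> clear * - <;> decide +revert
  rw [a3, a5, chiNeg15]
  have : (-1 : ℤ) ^ (p / 2) * (-1 : ℤ) ^ (p / 2) = 1 := by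
    rw [← pow_add, ← two_mul, pow_mul]; simp
  have h5 : (-1 : ℤ) ^ (5 / 2 * (p / 2)) = 1 := by
    rw [pow_mul]; simp
  have h3 : (-1 : ℤ) ^ (3 / 2 * (p / 2)) = (-1) ^ (p / 2) := by norm_num
  rw [h5, h3]
  linear_combination (chiNeg3 p * chi5 p) * this

/-- reduction theory for discriminant `-15` -/
lemma reduction : ∀ (a : ℕ) (b c : ℤ), 0 < a → 4 * (a : ℤ) * c = b ^ 2 + 15 →
    ∃ (e : Bool) (p q : ℤ × ℤ), fA e * p.1 ^ 2 + fB e * p.2 ^ 2 = 4 * (a : ℤ) ∧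
      fA e * q.1 ^ 2 + fB e * q.2 ^ 2 = 4 * c ∧ fA e * p.1 * q.1 + fB e * p.2 * q.2 = 2 * b := by
  intro a
  induction a using Nat.strong_induction_on with
  | _ a ih =>
  -- first the case |b| ≤ a
  have key : ∀ (b c : ℤ), 0 < a → |b| ≤ a → 4 * (a : ℤ) * c = b ^ 2 + 15 →
    ∃ (e : Bool) (p q : ℤ × ℤ), fA e * p.1 ^ 2 + fB e * p.2 ^ 2 = 4 * (a : ℤ) ∧
      fA e * q.1 ^ 2 + fB e * q.2 ^ 2 = 4 * c ∧ fA e * p.1 * q.1 + fB e * p.2 * q.2 = 2 * b := by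
    intro b c ha hb h
    have hb' := abs_le.1 hb
    have ha' : (0 : ℤ) < a := by exact_mod_cast ha
    have hc : 0 < c := by
      by_contra hc
      push Not at hc
      nlinarith [sq_nonneg b]
    by_cases hca : c < a
    · lift c to ℕ using hc.le
      obtain ⟨e, p, q, h1, h2, h3⟩ := ih c (by exact_mod_cast hca) b a (by exact_mod_cast hc) (by linarith)
      exact ⟨e, q, p, h2, h1, by linarith⟩
    · push Not at hca
      have hb2 : b ^ 2 ≤ (a : ℤ) ^ 2 := by nlinarith
      have ha2 : a ≤ 2 := by
        by_contra hh
        push Not at hh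
        have : (3 : ℤ) ≤ a := by exact_mod_cast hh
        nlinarith
      have hb3 : -2 ≤ b ∧ b ≤ 2 := by omega
      obtain ⟨hb4, hb5⟩ := hb3
      interval_cases a
      · interval_cases b
        · omega
        · have : c = 4 := by omega
          subst this
          exact ⟨false, (2, 0), (-1, 1), by simp [fA, fB], by simp [fA, fB], by simp [fA, fB]⟩
        · omega
        · have : c = 4 := by omega
          subst this
          exact ⟨false, (2, 0), (1, 1), by simp [fA, fB], by simp [fA, fB], by simp [fA, fB]⟩
        · omega
      · interval_cases b
        · omega
        · have : c = 2 := by omega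
          subst this
          exact ⟨true, (1, 1), (1, -1), by simp [fA, fB], by simp [fA, fB], by simp [fA, fB]⟩
        · omega
        · have : c = 2 := by omega
          subst this
          exact ⟨true, (1, 1), (-1, 1), by simp [fA, fB], by simp [fA, fB], by simp [fA, fB]⟩
        · omega
  intro b c ha h
  have ha' : (0 : ℤ) < a := by exact_mod_cast ha
  obtain ⟨k, hk⟩ : ∃ k : ℤ, |b + 2 * k * a| ≤ a := by
    refine ⟨-((b + a) / (2 * a)), ?_⟩
    have h1 := Int.emod_nonneg (b + a) (b := 2 * a) (by omega)
    have h2 := Int.emod_lt_of_pos (b + a) (b := 2 * a) (by omega)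
    have h3 := Int.emod_add_mul_ediv (b + a) (2 * a)
    rw [abs_le]
    constructor <;> nlinarith
  obtain ⟨e, p, q, h1, h2, h3⟩ := key (b + 2 * k * a) (c + k * b + k ^ 2 * a) ha hk (by linear_combination h)
  refine ⟨e, p, (q.1 - k * p.1, q.2 - k * p.2), h1, ?_, ?_⟩
  · linear_combination h2 - 2 * k * h3 + k ^ 2 * h1
  · linear_combination h3 - k * h1

lemma exists_rep {p : ℕ} (hp : p.Prime) (h : chiNeg15 p = 1) : ∃ e w, w ∈ SS e p := by
  obtain ⟨b, c, hbc⟩ : ∃ b c : ℤ, 4 * (p : ℤ) * c = b ^ 2 + 15 := by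
    by_cases h2 : p = 2
    · subst h2; exact ⟨1, 2, by norm_num⟩
    · have : Fact p.Prime := ⟨hp⟩
      have hodd : p % 2 = 1 := hp.eq_two_or_odd.resolve_left h2
      have hl := leg15 h2
      rw [h] at hl
      have hz : (((-15 : ℤ)) : ZMod p) ≠ 0 := by
        intro h0
        rw [(legendreSym.eq_zero_iff p (-15)).2 h0] at hl
        exact absurd hl (by norm_num)
      obtain ⟨y, hy⟩ := (legendreSym.eq_one_iff p hz).1 hl
      obtain ⟨b, rfl⟩ := ZMod.intCast_surjective y
      have hd : (p : ℤ) ∣ b ^ 2 + 15 := by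
        rw [← ZMod.intCast_zmod_eq_zero_iff_dvd]
        push_cast at hy ⊢
        linear_combination -hy
      -- make b odd
      obtain ⟨b', hb', hd'⟩ : ∃ b' : ℤ, b' % 2 = 1 ∧ (p : ℤ) ∣ b' ^ 2 + 15 := by
        rcases Int.emod_two_eq_zero_or_one b with hb | hb
        · refine ⟨b + p, by omega, ?_⟩
          have : (b + p) ^ 2 + 15 = (b ^ 2 + 15) + p * (2 * b + p) := by ring
          rw [this]
          exact dvd_add hd (dvd_mul_right _ _)
        · exact ⟨b, hb, hd⟩
      have h4 : (4 : ℤ) ∣ b' ^ 2 + 15 := by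
        obtain ⟨t, ht⟩ : ∃ t, b' = 2 * t + 1 := ⟨b' / 2, by omega⟩
        exact ⟨t ^ 2 + t + 4, by rw [ht]; ring⟩
      have hco : IsCoprime (4 : ℤ) (p : ℤ) := by
        have : Nat.Coprime 4 p := by
          have : Nat.Coprime (2 ^ 2) p := Nat.Coprime.pow_left _ ((Nat.coprime_primes Nat.prime_two hp).2 (Ne.symm h2))
          simpa using this
        exact_mod_cast Nat.isCoprime_iff_coprime.2 this
      obtain ⟨c, hc⟩ := hco.mul_dvd h4 hd'
      exact ⟨b', c, hc.symm⟩
  obtain ⟨e, w, -, h1, -⟩ := reduction p b c hp.pos hbc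
  exact ⟨e, w, h1⟩

lemma chi_of_rep {p : ℕ} (hp : p.Prime) (h3 : p ≠ 3) (d : Bool) {w : ℤ × ℤ} (hw : w ∈ SS d p) :
    chiNeg3 p = cond d (-1) 1 := by
  have h0 : p % 3 ≠ 0 := fun h => h3 ((Nat.prime_dvd_prime_iff_eq Nat.prime_three hp).1 (Nat.dvd_of_mod_eq_zero h)).symm
  obtain ⟨x, y⟩ := w
  simp only [SS, Set.mem_ofPred_eq] at hw
  have hx : x ^ 2 % 3 = 0 ∨ x ^ 2 % 3 = 1 := by
    have : x % 3 = 0 ∨ x % 3 = 1 ∨ x % 3 = 2 := by omega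
    rcases this with h | h | h <;> simp [pow_two, Int.mul_emod, h]
  have hy : y ^ 2 % 3 = 0 ∨ y ^ 2 % 3 = 1 := by
    have : y % 3 = 0 ∨ y % 3 = 1 ∨ y % 3 = 2 := by omega
    rcases this with h | h | h <;> simp [pow_two, Int.mul_emod, h]
  generalize x ^ 2 = u at *
  generalize y ^ 2 = v at *
  cases d <;> simp only [fA, fB, cond_true, cond_false, chiNeg3] at * 
  · have : p % 3 = 1 := by omega
    simp [this]
  · have : p % 3 = 2 := by omega
    simp [this]

noncomputable def NP (e : Bool) (p n : ℕ) : ℕ := if p ∣ n then NN e (n / p) else 0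

lemma ncard_div (e : Bool) {p n : ℕ} (hp : p.Prime) (hn : n ≠ 0) :
    {z ∈ SS e (p * n) | (p : ℤ) ∣ z.1 ∧ (p : ℤ) ∣ z.2}.ncard = NP e p n := by
  have hp0 : (p : ℤ) ≠ 0 := by exact_mod_cast hp.ne_zero
  rw [NP]
  split_ifs with hd
  · obtain ⟨k, rfl⟩ := hd
    rw [Nat.mul_div_cancel_left _ hp.pos, NN]
    have : {z ∈ SS e (p * (p * k)) | (p : ℤ) ∣ z.1 ∧ (p : ℤ) ∣ z.2}
        = (fun z : ℤ × ℤ => ((p : ℤ) * z.1, (p : ℤ) * z.2)) '' SS e k := by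
      ext ⟨x, y⟩
      simp only [SS, Set.mem_ofPred_eq, Set.mem_image, Prod.mk.injEq, Prod.exists]
      constructor
      · rintro ⟨h, ⟨a, rfl⟩, ⟨b, rfl⟩⟩
        refine ⟨a, b, ?_, rfl, rfl⟩
        apply mul_left_cancel₀ (pow_ne_zero 2 hp0)
        push_cast at h
        linear_combination h
      · rintro ⟨a, b, h, rfl, rfl⟩
        refine ⟨?_, dvd_mul_right _ _, dvd_mul_right _ _⟩
        push_cast
        linear_combination (p : ℤ) ^ 2 * h
    rw [this, Set.ncard_image_of_injective]
    rintro ⟨a, b⟩ ⟨c, d⟩ h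
    simp only [Prod.mk.injEq] at h ⊢
    exact ⟨mul_left_cancel₀ hp0 h.1, mul_left_cancel₀ hp0 h.2⟩
  · rw [Set.ncard_eq_zero ((SS_fin e _).subset (Set.sep_subset _ _)), Set.eq_empty_iff_forall_notMem]
    rintro ⟨x, y⟩ ⟨h, ⟨a, ha⟩, ⟨b, hb⟩⟩
    simp only at ha hb
    subst ha hb
    simp only [SS, Set.mem_ofPred_eq] at h
    have h' : (p : ℤ) * (fA e * a ^ 2 + fB e * b ^ 2) = 4 * n := by
      apply mul_left_cancel₀ hp0
      push_cast at h
      linear_combination h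
    by_cases h2 : p = 2
    · subst h2
      have hn' : (n : ℤ) % 2 = 1 := by omega
      -- a² A + b² B = 2 n with n odd
      have ha : a % 4 = 0 ∨ a % 4 = 1 ∨ a % 4 = 2 ∨ a % 4 = 3 := by omega
      have hb : b % 4 = 0 ∨ b % 4 = 1 ∨ b % 4 = 2 ∨ b % 4 = 3 := by omega
      have ha2 : a ^ 2 % 4 = 0 ∨ a ^ 2 % 4 = 1 := by
        rcases ha with h | h | h | h <;> simp [pow_two, Int.mul_emod, h]
      have hb2 : b ^ 2 % 4 = 0 ∨ b ^ 2 % 4 = 1 := by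
        rcases hb with h | h | h | h <;> simp [pow_two, Int.mul_emod, h]
      generalize a ^ 2 = u at *
      generalize b ^ 2 = v at *
      cases e <;> simp only [fA, fB, cond_true, cond_false] at * <;> omega
    · have hdd : (p : ℤ) ∣ 4 * n := ⟨_, h'.symm⟩
      have : p ∣ 4 * n := by exact_mod_cast hdd
      rcases (Nat.Prime.dvd_mul hp).1 this with h4 | h4
      · have : p ∣ 2 := hp.dvd_of_dvd_pow (show p ∣ 2 ^ 2 by simpa using h4)
        exact h2 ((Nat.prime_dvd_prime_iff_eq hp Nat.prime_two).1 this)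
      · exact hd h4

lemma not_dvd_of {p : ℕ} (hp : p.Prime) (h3 : p ≠ 3) (h5 : p ≠ 5) :
    ¬ (p : ℤ) ∣ 3 ∧ ¬ (p : ℤ) ∣ 5 ∧ ¬ (p : ℤ) ∣ 15 ∧ ¬ (p : ℤ) ∣ 1 := by
  have a3 : ¬ p ∣ 3 := fun h => h3 ((Nat.prime_dvd_prime_iff_eq hp Nat.prime_three).1 h)
  have a5 : ¬ p ∣ 5 := fun h => h5 ((Nat.prime_dvd_prime_iff_eq hp Nat.prime_five).1 h)
  refine ⟨by exact_mod_cast a3, by exact_mod_cast a5, ?_, ?_⟩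
  · intro h
    have : p ∣ 3 * 5 := by exact_mod_cast h
    rcases (Nat.Prime.dvd_mul hp).1 this with h | h
    · exact a3 h
    · exact a5 h
  · intro h
    have : p ∣ 1 := by exact_mod_cast h
    exact hp.one_lt.ne' (Nat.dvd_one.1 this)

lemma sq_dvd_aux {p : ℕ} (hp : p.Prime) {B Y X A N : ℤ} (hB : ¬ (p : ℤ) ∣ B) (hX : (p : ℤ) ∣ X)
    (h : A * X ^ 2 + B * Y ^ 2 = p ^ 2 * N) : (p : ℤ) ∣ Y := by
  have hpi : Prime (p : ℤ) := Nat.prime_iff_prime_int.1 hp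
  obtain ⟨t, rfl⟩ := hX
  have : (p : ℤ) ∣ B * Y ^ 2 := ⟨p * N - A * p * t ^ 2, by linear_combination h⟩
  exact hpi.dvd_of_dvd_pow ((hpi.dvd_or_dvd this).resolve_left hB)

lemma ml_cj_sum {e d : Bool} {n m : ℕ} {z w : ℤ × ℤ} (hz : z ∈ SS e n) (hw : w ∈ SS d m) :
    (ml e d z w).1 + (ml e d z (cj w)).1 = k1 e d * z.1 * w.1 ∧
    (ml e d z w).2 + (ml e d z (cj w)).2 = k4 e d * z.2 * w.1 := by
  have h1 := ml_fst hz hw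
  have h2 := ml_snd hz hw
  have h3 := ml_fst hz (cj_mem hw)
  have h4 := ml_snd hz (cj_mem hw)
  simp only [X2, Y2, cj] at *
  constructor <;> linarith

lemma ml_cj_prod {e d : Bool} {n m : ℕ} {z w : ℤ × ℤ} (hz : z ∈ SS e n) (hw : w ∈ SS d m) :
    fA (xor e d) * ((ml e d z w).1 * (ml e d z (cj w)).1) = n * (fA d * w.1 ^ 2) - fB e * z.2 ^ 2 * m := by
  have h1 := ml_fst hz hw
  have h3 := ml_fst hz (cj_mem hw)
  have hz' : fA e * z.1 ^ 2 + fB e * z.2 ^ 2 = 4 * (n : ℤ) := hz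
  have hw' : fA d * w.1 ^ 2 + fB d * w.2 ^ 2 = 4 * (m : ℤ) := hw
  have : 4 * (fA (xor e d) * ((ml e d z w).1 * (ml e d z (cj w)).1)) = 4 * (n * (fA d * w.1 ^ 2) - fB e * z.2 ^ 2 * m) := by
    calc _ = fA (xor e d) * (X2 e d z w * X2 e d z (cj w)) := by rw [← h1, ← h3]; ring
      _ = (4 * n) * (fA d * w.1 ^ 2) - fB e * z.2 ^ 2 * (4 * m) := by
        rw [← hz', ← hw']
        cases e <;> cases d <;> simp [X2, k1, k2, fA, fB, cj] <;> ring
      _ = _ := by ring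
  linarith

lemma cj_cj (w : ℤ × ℤ) : cj (cj w) = w := by simp [cj]

/-- the elements divisible by `w` -/
lemma ncard_image (e d : Bool) {p n : ℕ} (hp : p.Prime) {w : ℤ × ℤ} (hw : w ∈ SS d p) :
    {z ∈ SS e (p * n) | (p : ℤ) ∣ (ml e d z (cj w)).1 ∧ (p : ℤ) ∣ (ml e d z (cj w)).2}.ncard
      = NN (xor e d) n := by
  have hp0 : (p : ℤ) ≠ 0 := by exact_mod_cast hp.ne_zero
  have hx : xor (xor e d) d = e := by simp
  have : {z ∈ SS e (p * n) | (p : ℤ) ∣ (ml e d z (cj w)).1 ∧ (p : ℤ) ∣ (ml e d z (cj w)).2}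
      = (fun z => ml (xor e d) d z w) '' SS (xor e d) n := by
    ext z
    constructor
    · rintro ⟨hz, ⟨a, ha⟩, ⟨b, hb⟩⟩
      have hm := ml_mem hz (cj_mem hw)
      have hab : (a, b) ∈ SS (xor e d) n := by
        simp only [SS, Set.mem_ofPred_eq] at hm ⊢
        rw [ha, hb] at hm
        apply mul_left_cancel₀ (pow_ne_zero 2 hp0)
        push_cast at hm
        linear_combination hm
      refine ⟨(a, b), hab, ?_⟩
      have h := ml_cj hz (cj_mem hw)
      rw [cj_cj] at h
      have e1 : ml e d z (cj w) = (p * a, p * b) := Prod.ext ha hb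
      have h1 := ml_fst hab hw
      have h2 := ml_snd hab hw
      have h3 := ml_fst hm hw
      have h4 := ml_snd hm hw
      rw [h] at h3 h4
      rw [e1] at h3 h4
      simp only [X2, Y2] at h1 h2 h3 h4
      ext
      · apply mul_left_cancel₀ hp0
        apply mul_left_cancel₀ (two_ne_zero (α := ℤ))
        show 2 * ((p : ℤ) * (ml (xor e d) d (a, b) w).1) = 2 * (p * z.1)
        linear_combination (p : ℤ) * h1 - h3
      · apply mul_left_cancel₀ hp0
        apply mul_left_cancel₀ (two_ne_zero (α := ℤ))
        show 2 * ((p : ℤ) * (ml (xor e d) d (a, b) w).2) = 2 * (p * z.2)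
        linear_combination (p : ℤ) * h2 - h4
    · rintro ⟨v, hv, rfl⟩
      have hm := ml_mem hv hw
      have h := ml_cj hv hw
      rw [hx] at hm h
      refine ⟨by rw [mul_comm]; exact hm, ?_⟩
      show (p : ℤ) ∣ (ml e d (ml (e ^^ d) d v w) (cj w)).1 ∧ (p : ℤ) ∣ (ml e d (ml (e ^^ d) d v w) (cj w)).2
      rw [h]
      exact ⟨dvd_mul_right _ _, dvd_mul_right _ _⟩
  rw [this, Set.InjOn.ncard_image, NN]
  intro v hv v' hv' h
  have h1 := ml_cj hv hw
  have h2 := ml_cj hv' hw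
  simp only at h
  rw [h, h2] at h1
  simp only [Prod.mk.injEq] at h1
  exact Prod.ext (mul_left_cancel₀ hp0 h1.1.symm) (mul_left_cancel₀ hp0 h1.2.symm)

lemma split_rec (e d : Bool) {p n : ℕ} (hp : p.Prime) (h3 : p ≠ 3) (h5 : p ≠ 5) (hn : n ≠ 0)
    {w : ℤ × ℤ} (hw : w ∈ SS d p) :
    NN e (p * n) + NP e p n = 2 * NN (xor e d) n := by
  have hpi : Prime (p : ℤ) := Nat.prime_iff_prime_int.1 hp
  have hp0 : (p : ℤ) ≠ 0 := by exact_mod_cast hp.ne_zero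
  obtain ⟨n3, n5, n15, n1⟩ := not_dvd_of hp h3 h5
  have nA : ∀ e, ¬ (p : ℤ) ∣ fA e := by intro e; cases e <;> simpa [fA]
  have nB : ∀ e, ¬ (p : ℤ) ∣ fB e := by intro e; cases e <;> simpa [fB]
  have nk1 : ¬ (p : ℤ) ∣ k1 e d := by cases e <;> cases d <;> simpa [k1]
  have nk4 : ¬ (p : ℤ) ∣ k4 e d := by cases e <;> cases d <;> simpa [k4]
  have hw' : fA d * w.1 ^ 2 + fB d * w.2 ^ 2 = 4 * (p : ℤ) := hw
  have nw : ¬ (p : ℤ) ∣ w.1 := by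
    intro hd
    have hd2 : (p : ℤ) ∣ w.2 := by
      have : (p : ℤ) ∣ fB d * w.2 ^ 2 := by
        have : fB d * w.2 ^ 2 = 4 * p - fA d * w.1 ^ 2 := by linarith
        rw [this]
        exact dvd_sub (dvd_mul_left _ _) (Dvd.dvd.mul_left (dvd_pow hd two_ne_zero) _)
      exact hpi.dvd_of_dvd_pow ((hpi.dvd_or_dvd this).resolve_left (nB d))
    obtain ⟨a, ha⟩ := hd
    obtain ⟨b, hb⟩ := hd2
    rw [ha, hb] at hw'
    have h4 : (p : ℤ) * (fA d * a ^ 2 + fB d * b ^ 2) = 4 := by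
      apply mul_left_cancel₀ hp0
      linear_combination hw'
    have : p ∣ 4 := by
      have : (p : ℤ) ∣ 4 := ⟨_, h4.symm⟩
      exact_mod_cast this
    have : p ∣ 2 := hp.dvd_of_dvd_pow (show p ∣ 2 ^ 2 by simpa using this)
    have h2 : p = 2 := (Nat.prime_dvd_prime_iff_eq hp Nat.prime_two).1 this
    subst h2
    have ha2 : a ^ 2 = 0 ∨ a ^ 2 = 1 ∨ 4 ≤ a ^ 2 := by
      by_cases h : |a| ≤ 1
      · have := abs_le.1 h
        have : a = -1 ∨ a = 0 ∨ a = 1 := by omega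
        rcases this with rfl | rfl | rfl <;> simp
      · push Not at h
        right; right
        nlinarith [sq_abs a]
    have hb2 : b ^ 2 = 0 ∨ 1 ≤ b ^ 2 := by
      have := sq_nonneg b
      omega
    generalize a ^ 2 = u at *
    generalize b ^ 2 = v at *
    cases d <;> simp only [fA, fB, cond_true, cond_false] at * <;> omega
  set P := {z ∈ SS e (p * n) | (p : ℤ) ∣ (ml e d z (cj w)).1 ∧ (p : ℤ) ∣ (ml e d z (cj w)).2} with hP
  set Q := {z ∈ SS e (p * n) | (p : ℤ) ∣ (ml e d z w).1 ∧ (p : ℤ) ∣ (ml e d z w).2} with hQ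
  have hPc : P.ncard = NN (xor e d) n := ncard_image e d hp hw
  have hQc : Q.ncard = NN (xor e d) n := by
    have := ncard_image e d (n := n) hp (cj_mem hw)
    rw [cj_cj] at this
    exact this
  have hPf : P.Finite := (SS_fin e _).subset (Set.sep_subset _ _)
  have hQf : Q.Finite := (SS_fin e _).subset (Set.sep_subset _ _)
  have key : ∀ {z w' : ℤ × ℤ}, z ∈ SS e (p * n) → w' ∈ SS d p → (p : ℤ) ∣ (ml e d z w').1 →
      (p : ℤ) ∣ (ml e d z w').2 := by
    intro z w' hz hw' hdv
    have hm := ml_mem hz hw'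
    simp only [SS, Set.mem_ofPred_eq] at hm
    push_cast at hm
    exact sq_dvd_aux hp (nB (xor e d)) hdv (A := fA (xor e d)) (N := 4 * n) (by linear_combination hm)
  have hU : P ∪ Q = SS e (p * n) := by
    ext z
    constructor
    · rintro (h | h) <;> exact h.1
    · intro hz
      have h := ml_cj_prod hz hw
      have hdv : (p : ℤ) ∣ fA (e ^^ d) * ((ml e d z w).1 * (ml e d z (cj w)).1) := by
        refine ⟨n * (fA d * w.1 ^ 2) - fB e * z.2 ^ 2, ?_⟩
        rw [h]; push_cast; ring
      rcases hpi.dvd_or_dvd ((hpi.dvd_or_dvd hdv).resolve_left (nA _)) with h | h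
      · exact Or.inr ⟨hz, h, key hz hw h⟩
      · exact Or.inl ⟨hz, h, key hz (cj_mem hw) h⟩
  have hI : P ∩ Q = {z ∈ SS e (p * n) | (p : ℤ) ∣ z.1 ∧ (p : ℤ) ∣ z.2} := by
    ext z
    constructor
    · rintro ⟨⟨hz, a1, a2⟩, ⟨-, b1, b2⟩⟩
      obtain ⟨s1, s2⟩ := ml_cj_sum hz hw
      have c1 := dvd_add b1 a1
      have c2 := dvd_add b2 a2
      rw [s1] at c1
      rw [s2] at c2
      exact ⟨hz, (hpi.dvd_or_dvd ((hpi.dvd_or_dvd c1).resolve_right nw)).resolve_left nk1,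
        (hpi.dvd_or_dvd ((hpi.dvd_or_dvd c2).resolve_right nw)).resolve_left nk4⟩
    · rintro ⟨hz, a1, a2⟩
      have aux : ∀ {w' : ℤ × ℤ}, w' ∈ SS d p → (p : ℤ) ∣ (ml e d z w').1 ∧ (p : ℤ) ∣ (ml e d z w').2 := by
        intro w' hw'
        obtain ⟨x, hx⟩ := a1
        obtain ⟨y, hy⟩ := a2
        have g1 := ml_fst hz hw'
        have hpar := par hw'
        by_cases h2 : p = 2
        · have hpr : (p : ℤ) ∣ (ml e d z w').1 := by
            have hmp := par (ml_mem hz hw')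
            have hm := ml_cj_prod hz hw'
            -- x ≡ y mod 2 needed
            have hz' : fA e * z.1 ^ 2 + fB e * z.2 ^ 2 = 4 * ((p * n : ℕ) : ℤ) := hz
            rw [hx, hy] at hz'
            subst h2
            push_cast at hz'
            have hxy : x % 2 = y % 2 := by
              have e1 : fA e * x ^ 2 + fB e * y ^ 2 = 2 * n := by
                linarith
              rcases Int.emod_two_eq_zero_or_one x with hx | hx <;> rcases Int.emod_two_eq_zero_or_one y with hy | hy <;> try omega
              all_goals exfalso
              all_goals have h2 := congrArg (· % 2) e1
              all_goals cases e <;> simp [fA, fB, pow_two, Int.add_emod, Int.mul_emod, hx, hy] at h2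
            simp only [X2, hx, hy] at g1
            have : (ml e d z w').1 = k1 e d * x * w'.1 - k2 e d * y * w'.2 := by
              push_cast at g1
              linarith
            rw [this]
            apply Int.dvd_of_emod_eq_zero
            rcases Int.emod_two_eq_zero_or_one x with hx | hx <;>
            rcases Int.emod_two_eq_zero_or_one w'.1 with hy | hy <;>
            rw [hx] at hxy <;> rw [hy] at hpar <;>
            cases e <;> cases d <;>
            simp [k1, k2, Int.sub_emod, Int.mul_emod, hx, hy, ← hxy, ← hpar]
          exact ⟨hpr, key hz hw' hpr⟩
        · have hpr : (p : ℤ) ∣ (ml e d z w').1 := by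
            have hdv : (p : ℤ) ∣ 2 * (ml e d z w').1 := by
              rw [g1, X2, hx, hy]
              exact ⟨k1 e d * x * w'.1 - k2 e d * y * w'.2, by ring⟩
            refine (hpi.dvd_or_dvd hdv).resolve_left ?_
            intro h
            have : p ∣ 2 := by exact_mod_cast h
            exact h2 ((Nat.prime_dvd_prime_iff_eq hp Nat.prime_two).1 this)
          exact ⟨hpr, key hz hw' hpr⟩
      exact ⟨⟨hz, aux (cj_mem hw)⟩, ⟨hz, aux hw⟩⟩
  have h := Set.ncard_union_add_ncard_inter P Q hPf hQf
  rw [hU, hI, ncard_div e hp hn, hPc, hQc] at h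
  rw [NN, h]; ring

lemma inert_rec (e : Bool) {p n : ℕ} (hp : p.Prime) (hn : n ≠ 0) (h : chiNeg15 p = -1) :
    NN e (p * n) = NP e p n := by
  have : Fact p.Prime := ⟨hp⟩
  have hpi : Prime (p : ℤ) := Nat.prime_iff_prime_int.1 hp
  have h2 : p ≠ 2 := by rintro rfl; exact absurd h (by decide)
  have h3 : p ≠ 3 := by rintro rfl; exact absurd h (by decide)
  have h5 : p ≠ 5 := by rintro rfl; exact absurd h (by decide)
  obtain ⟨n3, n5, n15, n1⟩ := not_dvd_of hp h3 h5
  have hl := leg15 h2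
  rw [h] at hl
  have hns := (legendreSym.eq_neg_one_iff p).1 hl
  rw [← ncard_div e hp hn, NN]
  congr 1
  ext ⟨x, y⟩
  refine ⟨fun hz => ?_, fun hz => hz.1⟩
  have hz' : fA e * x ^ 2 + fB e * y ^ 2 = 4 * ((p * n : ℕ) : ℤ) := hz
  have hAB : fA e * fB e = 15 := by cases e <;> simp [fA, fB]
  have nA : ¬ (p : ℤ) ∣ fA e := by cases e <;> simpa [fA]
  have hy : (p : ℤ) ∣ y := by
    by_contra hy
    apply hns
    have hy0 : ((y : ℤ) : ZMod p) ≠ 0 := fun h0 => hy ((ZMod.intCast_zmod_eq_zero_iff_dvd y p).1 h0)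
    refine ⟨((fA e * x : ℤ) : ZMod p) / (y : ZMod p), ?_⟩
    have hc := congrArg (Int.cast : ℤ → ZMod p) hz'
    have hc2 := congrArg (Int.cast : ℤ → ZMod p) hAB
    push_cast at hc hc2 ⊢
    field_simp
    simp only [CharP.cast_eq_zero, zero_mul, mul_zero] at hc
    linear_combination (fA e : ZMod p) * (-hc) + (y : ZMod p) ^ 2 * hc2
  refine ⟨hz, ?_, hy⟩
  have : (p : ℤ) ∣ fA e * x ^ 2 := by
    have e1 : fA e * x ^ 2 = p * (4 * n) - fB e * y ^ 2 := by push_cast at hz'; linarith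
    rw [e1]
    exact dvd_sub (dvd_mul_right _ _) (Dvd.dvd.mul_left (dvd_pow hy two_ne_zero) _)
  exact hpi.dvd_of_dvd_pow ((hpi.dvd_or_dvd this).resolve_left nA)

lemma ram3 (e : Bool) (n : ℕ) : NN e (3 * n) = NN (!e) n := by
  have hpi : Prime (3 : ℤ) := Int.prime_three
  cases e
  · have : SS false (3 * n) = (fun z : ℤ × ℤ => (3 * z.1, z.2)) '' SS true n := by
      ext ⟨x, y⟩
      simp only [SS, fA, fB, cond_true, cond_false, Set.mem_ofPred_eq, Set.mem_image, Prod.mk.injEq, Prod.exists, Nat.cast_mul, Nat.cast_ofNat]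
      constructor
      · intro h
        obtain ⟨a, rfl⟩ : (3 : ℤ) ∣ x := hpi.dvd_of_dvd_pow (n := 2) (by omega)
        exact ⟨a, y, by linarith, rfl, rfl⟩
      · rintro ⟨a, b, h, rfl, rfl⟩
        linarith
    rw [NN, this, Set.ncard_image_of_injective]
    · rfl
    · rintro ⟨a, b⟩ ⟨c, d⟩ h
      simp only [Prod.mk.injEq] at h ⊢
      omega
  · have : SS true (3 * n) = (fun z : ℤ × ℤ => (z.1, 3 * z.2)) '' SS false n := by
      ext ⟨x, y⟩
      simp only [SS, fA, fB, cond_true, cond_false, Set.mem_ofPred_eq, Set.mem_image, Prod.mk.injEq, Prod.exists, Nat.cast_mul, Nat.cast_ofNat]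
      constructor
      · intro h
        obtain ⟨a, rfl⟩ : (3 : ℤ) ∣ y := hpi.dvd_of_dvd_pow (n := 2) (by omega)
        exact ⟨x, a, by linarith, rfl, rfl⟩
      · rintro ⟨a, b, h, rfl, rfl⟩
        linarith
    rw [NN, this, Set.ncard_image_of_injective]
    · rfl
    · rintro ⟨a, b⟩ ⟨c, d⟩ h
      simp only [Prod.mk.injEq] at h ⊢
      omega

lemma ram5 (e : Bool) (n : ℕ) : NN e (5 * n) = NN (!e) n := by
  have hpi : Prime (5 : ℤ) := Nat.prime_iff_prime_int.1 Nat.prime_five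
  have : SS e (5 * n) = (fun z : ℤ × ℤ => (5 * z.2, z.1)) '' SS (!e) n := by
    ext ⟨x, y⟩
    cases e <;>
    simp only [SS, fA, fB, Bool.not_true, Bool.not_false, cond_true, cond_false, Set.mem_ofPred_eq, Set.mem_image, Prod.mk.injEq, Prod.exists, Nat.cast_mul, Nat.cast_ofNat] <;>
    constructor
    · intro h
      obtain ⟨a, rfl⟩ : (5 : ℤ) ∣ x := hpi.dvd_of_dvd_pow (n := 2) (by omega)
      exact ⟨y, a, by linarith, rfl, rfl⟩
    · rintro ⟨a, b, h, rfl, rfl⟩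
      linarith
    · intro h
      obtain ⟨a, rfl⟩ : (5 : ℤ) ∣ x := hpi.dvd_of_dvd_pow (n := 2) (by omega)
      exact ⟨y, a, by linarith, rfl, rfl⟩
    · rintro ⟨a, b, h, rfl, rfl⟩
      linarith
  rw [NN, this, Set.ncard_image_of_injective]
  · rfl
  · rintro ⟨a, b⟩ ⟨c, d⟩ h
    simp only [Prod.mk.injEq] at h ⊢
    omega

lemma SS_zero (e : Bool) {z : ℤ × ℤ} (h : z ∈ SS e 0) : z = 0 := by
  have hz : fA e * z.1 ^ 2 + fB e * z.2 ^ 2 = 4 * ((0 : ℕ) : ℤ) := h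
  have hA : 1 ≤ fA e := by cases e <;> simp [fA]
  have hB : 1 ≤ fB e := by cases e <;> simp [fB]
  push_cast at hz
  have h1 : z.1 ^ 2 = 0 := by nlinarith [sq_nonneg z.1, sq_nonneg z.2]
  have h2 : z.2 ^ 2 = 0 := by nlinarith [sq_nonneg z.1, sq_nonneg z.2]
  exact Prod.ext (pow_eq_zero_iff two_ne_zero |>.1 h1) (pow_eq_zero_iff two_ne_zero |>.1 h2)

lemma NN_one_f : NN false 1 = 2 := by
  have : SS false 1 = {(2, 0), (-2, 0)} := by
    ext ⟨x, y⟩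
    simp only [SS, fA, fB, cond_false, Set.mem_ofPred_eq, Set.mem_insert_iff, Set.mem_singleton_iff, Prod.mk.injEq]
    constructor
    · intro h
      have hy : y = 0 := by
        by_contra hy
        have := Int.one_le_abs hy
        push_cast at h
        nlinarith [sq_abs y, sq_nonneg x]
      subst hy
      have : (x - 2) * (x + 2) = 0 := by push_cast at h; linarith
      rcases mul_eq_zero.1 this with h | h
      · left; omega
      · right; omega
    · rintro (⟨rfl, rfl⟩ | ⟨rfl, rfl⟩) <;> norm_num
  rw [NN, this, Set.ncard_pair (by simp)]

lemma NN_one_t : NN true 1 = 0 := by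
  rw [NN, Set.ncard_eq_zero (SS_fin _ _), Set.eq_empty_iff_forall_notMem]
  rintro ⟨x, y⟩ h
  simp only [SS, fA, fB, cond_true, Set.mem_ofPred_eq] at h
  push_cast at h
  have hy : y = 0 := by
    by_contra hy
    have := Int.one_le_abs hy
    nlinarith [sq_abs y, sq_nonneg x]
  subst hy
  omega

def cA (n : ℕ) : ℤ := cv (fun _ => 1) chiNeg15 n
def cB (n : ℕ) : ℤ := cv chiNeg3 chi5 n

lemma main_count (n : ℕ) (hn : n ≠ 0) :
    (NN false n : ℤ) = cA n + cB n ∧ (NN true n : ℤ) = cA n - cB n := by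
  induction n using Nat.strong_induction_on with
  | _ n ih =>
  by_cases h1 : n = 1
  · subst h1
    rw [NN_one_f, NN_one_t]
    simp [cA, cB, cv, chiNeg15, chiNeg3, chi5]
  · obtain ⟨p, hp, m, rfl⟩ := Nat.exists_prime_and_dvd h1
    have hm : m ≠ 0 := by rintro rfl; simp at hn
    have hpm : m < p * m := by
      have := hp.one_lt
      have := Nat.pos_of_ne_zero hm
      nlinarith
    obtain ⟨i1, i2⟩ := ih m hpm hm
    have ip : (NP false p m : ℤ) = (if p ∣ m then cA (m / p) else 0) + (if p ∣ m then cB (m / p) else 0)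
        ∧ (NP true p m : ℤ) = (if p ∣ m then cA (m / p) else 0) - (if p ∣ m then cB (m / p) else 0) := by
      simp only [NP]
      split_ifs with hd
      · have hlt : m / p < p * m := lt_of_le_of_lt (Nat.div_le_self _ _) hpm
        have h0 : m / p ≠ 0 := by
          obtain ⟨k, rfl⟩ := hd
          rw [Nat.mul_div_cancel_left _ hp.pos]
          rintro rfl; simp at hm
        exact ih _ hlt h0
      · simp
    obtain ⟨j1, j2⟩ := ip
    have rA := cv_rec (fun _ => 1) chiNeg15 (by simp) chi15_mul hp hm
    have rB := cv_rec chiNeg3 chi5 chi3_mul chi5_mul hp hm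
    change cA (p * m) + 1 * chiNeg15 p * (if p ∣ m then cA (m / p) else 0) = (1 + chiNeg15 p) * cA m at rA
    change cB (p * m) + chiNeg3 p * chi5 p * (if p ∣ m then cB (m / p) else 0)
      = (chiNeg3 p + chi5 p) * cB m at rB
    generalize (if p ∣ m then cA (m / p) else 0) = a' at *
    generalize (if p ∣ m then cB (m / p) else 0) = b' at *
    by_cases h3 : p = 3
    · subst h3
      rw [ram3, ram3]
      have e1 : chiNeg15 3 = 0 := by decide
      have e2 : chiNeg3 3 = 0 := by decide
      have e3 : chi5 3 = -1 := by decide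
      rw [e1] at rA
      rw [e2, e3] at rB
      simp only [Bool.not_true, Bool.not_false]
      constructor <;> linarith
    by_cases h5 : p = 5
    · subst h5
      rw [ram5, ram5]
      have e1 : chiNeg15 5 = 0 := by decide
      have e2 : chiNeg3 5 = -1 := by decide
      have e3 : chi5 5 = 0 := by decide
      rw [e1] at rA
      rw [e2, e3] at rB
      simp only [Bool.not_true, Bool.not_false]
      constructor <;> linarith
    have n3 : p % 3 ≠ 0 := fun h => h3 ((Nat.prime_dvd_prime_iff_eq Nat.prime_three hp).1 (Nat.dvd_of_mod_eq_zero h)).symm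
    have n5 : p % 5 ≠ 0 := fun h => h5 ((Nat.prime_dvd_prime_iff_eq Nat.prime_five hp).1 (Nat.dvd_of_mod_eq_zero h)).symm
    have v3 : chiNeg3 p = 1 ∨ chiNeg3 p = -1 := by
      simp only [chiNeg3]
      split_ifs <;> omega
    have v5 : chi5 p = 1 ∨ chi5 p = -1 := by
      simp only [chi5]
      split_ifs <;> omega
    have split : ∀ t : ℤ, chiNeg3 p = t → chi5 p = t → chiNeg15 p = 1 →
        (NN false (p * m) : ℤ) = cA (p * m) + cB (p * m) ∧ (NN true (p * m) : ℤ) = cA (p * m) - cB (p * m) := by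
      intro t e3 e5 e15
      obtain ⟨d, w, hw⟩ := exists_rep hp e15
      have ed := chi_of_rep hp h3 d hw
      have s1 := split_rec false d hp h3 h5 hm hw
      have s2 := split_rec true d hp h3 h5 hm hw
      rw [e3] at ed
      rw [e3, e5] at rB
      rw [e15] at rA
      zify at s1 s2
      cases d <;> simp only [cond_true, cond_false, Bool.xor_true, Bool.xor_false, Bool.not_true, Bool.not_false] at * <;> subst ed <;>
      constructor <;> linarith
    have inert : ∀ t : ℤ, chiNeg3 p = t → chi5 p = -t → chiNeg15 p = -1 →
        (NN false (p * m) : ℤ) = cA (p * m) + cB (p * m) ∧ (NN true (p * m) : ℤ) = cA (p * m) - cB (p * m) := by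
      intro t e3 e5 e15
      have s1 := inert_rec false hp hm e15
      have s2 := inert_rec true hp hm e15
      have e : chiNeg3 p * chi5 p = -1 := e15
      rw [e, e3, e5] at rB
      rw [e15] at rA
      rw [s1, s2]
      constructor <;> linarith
    rcases v3 with e3 | e3 <;> rcases v5 with e5 | e5
    · exact split 1 e3 e5 (by simp [chiNeg15, e3, e5])
    · exact inert 1 e3 e5 (by simp [chiNeg15, e3, e5])
    · exact inert (-1) e3 (by simpa using e5) (by simp [chiNeg15, e3, e5])
    · exact split (-1) e3 e5 (by simp [chiNeg15, e3, e5])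

/-- the representation set of the target form -/
def QS (n : ℕ) : Set (ℤ × ℤ) := {z | z.1 ^ 2 + 15 * z.2 ^ 2 = (n : ℤ)}

lemma QS_four (n : ℕ) : QS (4 * n) = SS false n := by
  ext z
  simp [QS, SS, fA, fB]

lemma sq4 (a : ℤ) : (a % 2 = 0 ∧ a ^ 2 % 4 = 0) ∨ (a % 2 = 1 ∧ a ^ 2 % 8 = 1) := by
  rcases Int.emod_two_eq_zero_or_one a with h | h
  · left
    obtain ⟨t, rfl⟩ : ∃ t, a = 2 * t := ⟨a / 2, by omega⟩
    refine ⟨h, ?_⟩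
    have : (2 * t) ^ 2 = 4 * t ^ 2 := by ring
    omega
  · right
    refine ⟨h, ?_⟩
    have : a % 8 = 1 ∨ a % 8 = 3 ∨ a % 8 = 5 ∨ a % 8 = 7 := by omega
    rcases this with h | h | h | h <;> simp [pow_two, Int.mul_emod, h]

lemma QS_odd {n : ℕ} (hn : n % 2 = 1) : (QS n).ncard = NN false n := by
  rw [NN]
  have : SS false n = (fun z : ℤ × ℤ => (2 * z.1, 2 * z.2)) '' QS n := by
    ext ⟨x, y⟩
    simp only [SS, QS, fA, fB, cond_false, Set.mem_ofPred_eq, Set.mem_image, Prod.mk.injEq, Prod.exists]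
    constructor
    · intro h
      have hxy : x % 2 = 0 ∧ y % 2 = 0 := by
        have h1 := sq4 x
        have h2 := sq4 y
        generalize x ^ 2 = u at *
        generalize y ^ 2 = v at *
        omega
      obtain ⟨a, rfl⟩ : ∃ t, x = 2 * t := ⟨x / 2, by omega⟩
      obtain ⟨b, rfl⟩ : ∃ t, y = 2 * t := ⟨y / 2, by omega⟩
      exact ⟨a, b, by linarith, rfl, rfl⟩
    · rintro ⟨a, b, h, rfl, rfl⟩
      linarith
  rw [this, Set.ncard_image_of_injective]
  rintro ⟨a, b⟩ ⟨c, d⟩ h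
  simp only [Prod.mk.injEq] at h ⊢
  omega

lemma QS_two {n : ℕ} (hn : n % 4 = 2) : QS n = ∅ := by
  rw [Set.eq_empty_iff_forall_notMem]
  rintro ⟨x, y⟩ h
  simp only [QS, Set.mem_ofPred_eq] at h
  have h1 := sq4 x
  have h2 := sq4 y
  generalize x ^ 2 = u at *
  generalize y ^ 2 = v at *
  omega

def shift (k : ℕ) (f : ℕ → ℤ) (n : ℕ) : ℤ := if k ∣ n then f (n / k) else 0

lemma QS_count (n : ℕ) (hn : n ≠ 0) :
    ((QS n).ncard : ℤ) = cA n - 2 * shift 2 cA n + 2 * shift 4 cA n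
      + (cB n + 2 * shift 2 cB n + 2 * shift 4 cB n) := by
  simp only [shift]
  obtain ⟨c1, c2⟩ := main_count n hn
  by_cases h2 : n % 2 = 1
  · have a2 : ¬ 2 ∣ n := by omega
    have a4 : ¬ 4 ∣ n := by omega
    simp only [QS_odd h2, c1, if_neg a2, if_neg a4]
    ring
  · obtain ⟨m, rfl⟩ : ∃ m, n = 2 * m := ⟨n / 2, by omega⟩
    have hm : m ≠ 0 := by rintro rfl; simp at hn
    have hw : ((1, 1) : ℤ × ℤ) ∈ SS true 2 := by simp [SS, fA, fB]
    have s1 := split_rec false true Nat.prime_two (by norm_num) (by norm_num) hm hw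
    obtain ⟨d1, d2⟩ := main_count m hm
    simp only [Bool.false_xor, NP] at s1
    have a2 : 2 ∣ 2 * m := by omega
    have b2 : 2 * m / 2 = m := by omega
    simp only [if_pos a2, b2]
    by_cases h4 : m % 2 = 0
    · obtain ⟨k, rfl⟩ : ∃ k, m = 2 * k := ⟨m / 2, by omega⟩
      have hk : k ≠ 0 := by rintro rfl; simp at hm
      obtain ⟨f1, f2⟩ := main_count k hk
      have a4 : 4 ∣ 2 * (2 * k) := by omega
      have b4 : 2 * (2 * k) / 4 = k := by omega
      have a5 : 2 ∣ 2 * k := by omega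
      have b5 : 2 * k / 2 = k := by omega
      have e : QS (2 * (2 * k)) = SS false k := by rw [← QS_four]; congr 1; ring
      simp only [if_pos a5, b5] at s1
      simp only [if_pos a4, b4, e]
      change ((NN false k : ℕ) : ℤ) = _
      zify at s1
      linarith
    · have a4 : ¬ 4 ∣ 2 * m := by omega
      have a5 : ¬ 2 ∣ m := by omega
      simp only [if_neg a5] at s1
      rw [QS_two (by omega)]
      simp only [if_neg a4, Set.ncard_empty]
      zify at s1
      push_cast
      linarith

lemma tsum_fiber {α : Type*} (N : α → ℕ) (h0 : ∀ x, N x ≠ 0) (hfin : ∀ n, Finite {x // N x = n})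
    {s a : ℂ} (h : LSeriesHasSum (fun n => ((Nat.card {x // N x = n} : ℕ) : ℂ)) s a) :
    ∑' x, 1 / ((N x : ℂ) ^ s) = a := by
  have hterm : ∀ n, ∑' x : {x // N x = n}, (1 / ((N x.1 : ℂ) ^ s))
      = LSeries.term (fun n => ((Nat.card {x // N x = n} : ℕ) : ℂ)) s n := by
    intro n
    have : ∀ x : {x // N x = n}, (1 / ((N x.1 : ℂ) ^ s)) = 1 / ((n : ℂ) ^ s) := fun x => by rw [x.2]
    rw [tsum_congr this, tsum_const]
    rcases eq_or_ne n 0 with rfl | hn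
    · have : IsEmpty {x // N x = 0} := ⟨fun x => h0 _ x.2⟩
      simp
    · rw [LSeries.term_of_ne_zero hn, nsmul_eq_mul]; ring
  have hnorm : ∀ n, ∑' x : {x // N x = n}, ‖(1 / ((N x.1 : ℂ) ^ s))‖
      = ‖LSeries.term (fun n => ((Nat.card {x // N x = n} : ℕ) : ℂ)) s n‖ := by
    intro n
    have : ∀ x : {x // N x = n}, ‖(1 / ((N x.1 : ℂ) ^ s))‖ = ‖1 / ((n : ℂ) ^ s)‖ := fun x => by rw [x.2]
    rw [tsum_congr this, tsum_const]
    rcases eq_or_ne n 0 with rfl | hn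
    · have : IsEmpty {x // N x = 0} := ⟨fun x => h0 _ x.2⟩
      simp
    · rw [LSeries.term_of_ne_zero hn, nsmul_eq_mul, norm_div, norm_div, norm_one, Complex.norm_natCast]; ring
  have hsum : Summable (fun x => 1 / ((N x : ℂ) ^ s)) := by
    apply Summable.of_norm
    rw [← (Equiv.sigmaFiberEquiv N).summable_iff]
    refine (summable_sigma_of_nonneg (fun x => norm_nonneg _)).2 ⟨fun n => ?_, ?_⟩
    · have := hfin n
      exact Summable.of_finite
    · have e : (fun n => ∑' x : {x // N x = n}, ‖(1 / ((N x.1 : ℂ) ^ s))‖)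
        = fun n => ‖LSeries.term (fun n => ((Nat.card {x // N x = n} : ℕ) : ℂ)) s n‖ := funext hnorm
      have h2 : Summable (fun n => ‖LSeries.term (fun n => ((Nat.card {x // N x = n} : ℕ) : ℂ)) s n‖) :=
        h.summable.norm
      rw [← e] at h2
      exact h2
  have hs' := (Equiv.sigmaFiberEquiv N).summable_iff.2 hsum
  rw [← (Equiv.sigmaFiberEquiv N).tsum_eq]
  refine (Summable.tsum_sigma' (fun n => ?_) hs').trans ?_
  · have := hfin n
    exact Summable.of_finite
  · exact (tsum_congr hterm).trans h.tsum_eq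

lemma shift_hasSum {f : ℕ → ℤ} {s a : ℂ} (k : ℕ) (hk : k ≠ 0)
    (h : LSeriesHasSum (fun n => (f n : ℂ)) s a) :
    LSeriesHasSum (fun n => (shift k f n : ℂ)) s ((k : ℂ) ^ (-s) * a) := by
  have hinj : Function.Injective (fun n : ℕ => k * n) := fun a b h => Nat.eq_of_mul_eq_mul_left (Nat.pos_of_ne_zero hk) h
  unfold LSeriesHasSum at *
  rw [← hinj.hasSum_iff]
  · convert h.mul_left ((k : ℂ) ^ (-s)) using 1
    · rfl
    funext n
    simp only [Function.comp]
    rcases eq_or_ne n 0 with rfl | hn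
    · simp
    · rw [LSeries.term_of_ne_zero (mul_ne_zero hk hn), LSeries.term_of_ne_zero hn]
      simp only [shift, dvd_mul_right, if_true, Nat.mul_div_cancel_left _ (Nat.pos_of_ne_zero hk)]
      rw [Nat.cast_mul, Complex.natCast_mul_natCast_cpow, Complex.cpow_neg]
      field_simp
  · intro n hn
    rcases eq_or_ne n 0 with rfl | hn0
    · simp
    · rw [LSeries.term_of_ne_zero hn0]
      have : ¬ k ∣ n := by
        rintro ⟨c, rfl⟩
        exact hn ⟨c, rfl⟩
      simp [shift, this]

lemma LSer_hasSum (χ : ℕ → ℤ) (hχ : ∀ n, |χ n| ≤ 1) {s : ℂ} (hs : 1 < s.re) :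
    LSeriesHasSum (fun n => (χ n : ℂ)) s (LSer χ s) := by
  have hsum : LSeriesSummable (fun n => (χ n : ℂ)) s := by
    refine LSeriesSummable_of_bounded_of_one_lt_re (m := 1) (fun n _ => ?_) hs
    rw [Complex.norm_intCast]
    exact_mod_cast hχ n
  have : LSer χ s = LSeries (fun n => (χ n : ℂ)) s := by
    rw [LSeries, hsum.tsum_eq_zero_add, LSeries.term_zero, zero_add, LSer]
    refine tsum_congr fun n => ?_
    rw [LSeries.term_of_ne_zero (Nat.succ_ne_zero n)]
    push_cast
    rfl
  rw [this]
  exact hsum.LSeriesHasSum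

lemma cv_hasSum {f g : ℕ → ℤ} {s a b : ℂ} (hf : LSeriesHasSum (fun n => (f n : ℂ)) s a)
    (hg : LSeriesHasSum (fun n => (g n : ℂ)) s b) : LSeriesHasSum (fun n => (cv f g n : ℂ)) s (a * b) := by
  have h := hf.convolution hg
  rw [LSeries.convolution_def] at h
  convert h using 2
  simp [cv]

lemma abs3 (n : ℕ) : |chiNeg3 n| ≤ 1 := by
  simp only [chiNeg3]; split_ifs <;> simp
lemma abs5 (n : ℕ) : |chi5 n| ≤ 1 := by
  simp only [chi5]; split_ifs <;> simp
lemma abs15 (n : ℕ) : |chiNeg15 n| ≤ 1 := by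
  rw [chiNeg15, abs_mul]
  exact mul_le_one₀ (abs3 n) (abs_nonneg _) (abs5 n)

def nrm (x : {p : ℤ × ℤ // p ≠ 0}) : ℕ := (x.1.1 ^ 2 + 15 * x.1.2 ^ 2).toNat

lemma nrm_cast (x : {p : ℤ × ℤ // p ≠ 0}) : (nrm x : ℤ) = x.1.1 ^ 2 + 15 * x.1.2 ^ 2 :=
  Int.toNat_of_nonneg (by positivity)

lemma nrm_ne (x : {p : ℤ × ℤ // p ≠ 0}) : nrm x ≠ 0 := by
  intro h
  have h1 := nrm_cast x
  rw [h] at h1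
  apply x.2
  apply SS_zero false
  simp only [SS, fA, fB, cond_false, Set.mem_ofPred_eq]
  push_cast at h1 ⊢
  linarith

lemma QS_fin (n : ℕ) : (QS n).Finite := by
  refine (SS_fin false (4 * n)).preimage (f := fun z : ℤ × ℤ => (4 * z.1, 4 * z.2)) ?_ |>.subset ?_
  · rintro ⟨a, b⟩ _ ⟨c, d⟩ _ h
    simp only [Prod.mk.injEq] at h ⊢
    omega
  · rintro ⟨a, b⟩ h
    simp only [QS, SS, fA, fB, cond_false, Set.mem_ofPred_eq, Set.mem_preimage] at h ⊢
    push_cast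
    linarith

def fibEquiv (n : ℕ) (hn : n ≠ 0) : {x // nrm x = n} ≃ QS n where
  toFun x := ⟨x.1.1, by
    have := nrm_cast x.1
    rw [x.2] at this
    exact this.symm⟩
  invFun z := ⟨⟨z.1, by
    intro h
    have hz : z.1.1 ^ 2 + 15 * z.1.2 ^ 2 = (n : ℤ) := z.2
    rw [h] at hz
    simp at hz
    exact hn (by exact_mod_cast hz.symm)⟩, by
    have hz : z.1.1 ^ 2 + 15 * z.1.2 ^ 2 = (n : ℤ) := z.2
    simp only [nrm]
    rw [hz]
    simp⟩
  left_inv x := rfl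
  right_inv z := rfl

lemma fib_finite (n : ℕ) : Finite {x // nrm x = n} := by
  rcases eq_or_ne n 0 with rfl | hn
  · have : IsEmpty {x // nrm x = 0} := ⟨fun x => nrm_ne _ x.2⟩
    infer_instance
  · have := (QS_fin n).to_subtype
    exact Finite.of_equiv _ (fibEquiv n hn).symm

/-- Zucker–Robertson: for `Re(s) > 1`,
`Q(1,0,15; s) = (1 − 2^{1−s} + 2^{1−2s}) ζ(s) L(χ₋₁₅, s) + (1 + 2^{1−s} + 2^{1−2s}) L(χ₋₃, s) L(χ₅, s)`. -/
theorem Q1015_eq (s : ℂ) (hs : 1 < s.re) :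
    (∑' p : {p : ℤ × ℤ // p ≠ 0},
        1 / (((p.1.1 : ℂ) ^ 2 + 15 * (p.1.2 : ℂ) ^ 2) ^ s)) =
      (1 - (2 : ℂ) ^ (1 - s) + (2 : ℂ) ^ (1 - 2 * s)) * riemannZeta s * LSer chiNeg15 s +
        (1 + (2 : ℂ) ^ (1 - s) + (2 : ℂ) ^ (1 - 2 * s)) * LSer chiNeg3 s * LSer chi5 s := by
  have hz : LSeriesHasSum (fun _ => ((1 : ℤ) : ℂ)) s (riemannZeta s) := by
    have := LSeriesHasSum_one hs
    convert this using 1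
    funext n
    simp
  have hA : LSeriesHasSum (fun n => (cA n : ℂ)) s (riemannZeta s * LSer chiNeg15 s) :=
    cv_hasSum hz (LSer_hasSum _ abs15 hs)
  have hB : LSeriesHasSum (fun n => (cB n : ℂ)) s (LSer chiNeg3 s * LSer chi5 s) :=
    cv_hasSum (LSer_hasSum _ abs3 hs) (LSer_hasSum _ abs5 hs)
  have hA2 := shift_hasSum 2 two_ne_zero hA
  have hA4 := shift_hasSum 4 four_ne_zero hA
  have hB2 := shift_hasSum 2 two_ne_zero hB
  have hB4 := shift_hasSum 4 four_ne_zero hB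
  have e2 : (2 : ℂ) ^ (1 - s) = 2 * (2 : ℂ) ^ (-s) := by
    rw [sub_eq_add_neg, Complex.cpow_add _ _ two_ne_zero, Complex.cpow_one]
  have e4 : (2 : ℂ) ^ (1 - 2 * s) = 2 * (4 : ℂ) ^ (-s) := by
    have h4 : (4 : ℂ) ^ (-s) = (2 : ℂ) ^ (-s) * (2 : ℂ) ^ (-s) := by
      have := Complex.natCast_mul_natCast_cpow 2 2 (-s)
      push_cast at this
      rw [← this]; norm_num
    rw [h4, ← Complex.cpow_add _ _ two_ne_zero, sub_eq_add_neg, Complex.cpow_add _ _ two_ne_zero,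
      Complex.cpow_one]
    congr 2; ring
  have key : ∀ x : {p : ℤ × ℤ // p ≠ 0},
      1 / (((x.1.1 : ℂ) ^ 2 + 15 * (x.1.2 : ℂ) ^ 2) ^ s) = 1 / ((nrm x : ℂ) ^ s) := by
    intro x
    have h := congrArg (Int.cast : ℤ → ℂ) (nrm_cast x)
    push_cast at h
    rw [h]
  rw [tsum_congr key]
  apply tsum_fiber nrm nrm_ne fib_finite
  rw [LSeriesHasSum_congr s _ (g := fun n => (cA n : ℂ) - 2 * (shift 2 cA n : ℂ) + 2 * (shift 4 cA n : ℂ)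
      + ((cB n : ℂ) + 2 * (shift 2 cB n : ℂ) + 2 * (shift 4 cB n : ℂ)))]
  · unfold LSeriesHasSum at *
    have hT := ((hA.sub (hA2.mul_left 2)).add (hA4.mul_left 2)).add
      ((hB.add (hB2.mul_left 2)).add (hB4.mul_left 2))
    convert hT using 1
    · rfl
    · funext n
      rcases eq_or_ne n 0 with rfl | hn
      · simp
      · simp only [LSeries.term_of_ne_zero hn]
        ring
    · rw [e2, e4]
      push_cast
      ring
  · intro n hn
    rw [Nat.card_congr (fibEquiv n hn)]
    have h := congrArg (Int.cast : ℤ → ℂ) (QS_count n hn)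
    push_cast at h
    exact h
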